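/- Define C_0 = V* and, for each k ≥ 0, C_{k+1} = C_k ∪ {v ∈ N(C_k) : no other vertex of N(C_k) is C_k-equivalent to v}. If C_k = V for some k ≥ 0, then the network is controllable, i.e. ∂_{q_v} ∈ 𝓜 and ∂_{p_v} ∈ 𝓜 for every v ∈ V. -/

import Mathlib

/-! Let `S` be the space of families `f = (f_w)` of polynomials for which all the fields
`∑_w f_w^{(k)}(q_w) ∂_{p_w}` belong to `𝓜`. Since `[[f, X₀], g]` is the field of `(f g)'`, the space
`S` is stable under `(f, g) ↦ (f g)'`, though not under products. For a controllable set `C` and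
`c ∈ C`, removing the `C`-components from `[∂_{q_c}, X₀]` leaves the field of the forces
`V''_{wc}(q_w - q_c)`; brackets with `∂_{q_c}` differentiate it, and Taylor's formula in `q_c` with
smooth coefficients turns it into the family `(V''_{wc})_w` of `S`.

It remains to separate `v` from every vertex `w` that is not equivalent to it by a function `h` with
`h S ⊆ S`. Such functions form an algebra of functions on a finite set, so they then contain the
indicator of `v`. If `h X ∈ S`, then the Euler operator `g ↦ (h X g)'` preserves `S`; it is diagonal
in the monomials, and inverting it shows that `h` itself preserves `S`. To find linear families
in `S`, translate each component of a force family so that its second highest coefficient vanishes,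
and differentiate until the degree is one. What survives is the family of top coefficients, which
has no constant terms. Vertices with equal top coefficients are then separated by the remaining
coefficients, unless their polynomials are translates of each other. -/

open scoped Classical
open Polynomial

noncomputable section

/-- Phase space ℝ^{2|V|}: positions `q = x.1` and momenta `p = x.2`. -/
abbrev Phase (V : Type) := (V → ℝ) × (V → ℝ)

/-- Lie bracket of vector fields: `[Y,Z](x) = DZ(x)·Y(x) − DY(x)·Z(x)`. -/
def lieB {V : Type} [Fintype V] (Y Z : Phase V → Phase V) : Phase V → Phase V :=
  fun x => fderiv ℝ Z x (Y x) - fderiv ℝ Y x (Z x)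

/-- The constant vector field `∂_{p_v}`. -/
def dp {V : Type} [Fintype V] [DecidableEq V] (v : V) : Phase V → Phase V :=
  fun _ => (0, Pi.single v 1)

/-- The constant vector field `∂_{q_v}`. -/
def dq {V : Type} [Fintype V] [DecidableEq V] (v : V) : Phase V → Phase V :=
  fun _ => (Pi.single v 1, 0)

/-- The constant vector field `∑_{v ∈ A} ∂_{p_v}`. -/
def dpSum {V : Type} [Fintype V] [DecidableEq V] (A : Finset V) : Phase V → Phase V :=
  fun _ => (0, ∑ v ∈ A, Pi.single v 1)

/-- The constant vector field `∑_{v ∈ A} ∂_{q_v}`. -/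
def dqSum {V : Type} [Fintype V] [DecidableEq V] (A : Finset V) : Phase V → Phase V :=
  fun _ => (∑ v ∈ A, Pi.single v 1, 0)

/-- The drift vector field
`X₀ = −∑_{v∈V*} γ_v p_v ∂_{p_v} + ∑_{v∈V} (p_v ∂_{q_v} − U_v'(q_v) ∂_{p_v})
      − ∑_{{u,v}∈E} V_{uv}'(q_u − q_v)(∂_{p_u} − ∂_{p_v})`,
written componentwise (using the symmetry `V_{vu}(x) = V_{uv}(−x)` of the
interaction potentials, the `∂_{p_v}`-component of the edge term at a vertex `v` is
`−∑_{w ~ v} V_{vw}'(q_v − q_w)`). -/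
def X0 {V : Type} [Fintype V] [DecidableEq V] (G : SimpleGraph V) [DecidableRel G.Adj]
    (γ : V → ℝ) (U : V → ℝ → ℝ) (Vp : V → V → Polynomial ℝ) : Phase V → Phase V :=
  fun x =>
    (x.2, fun v =>
      -(γ v) * x.2 v - deriv (U v) (x.1 v) -
        ∑ w ∈ Finset.univ.filter (fun w => G.Adj v w),
          (derivative (Vp v w)).eval (x.1 v - x.1 w))

/-- The smallest collection `𝓜` of vector fields on `ℝ^{2|V|}` that contains `∂_{p_v}`
for every `v ∈ V*`, and is closed under linear combinations, Lie brackets,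
bracketing with `X₀`, and multiplication by smooth scalar functions. -/
inductive MM {V : Type} [Fintype V] [DecidableEq V] (Vstar : Finset V)
    (X₀ : Phase V → Phase V) : (Phase V → Phase V) → Prop
  | basic (v : V) (hv : v ∈ Vstar) : MM Vstar X₀ (dp v)
  | add {Y Z : Phase V → Phase V} : MM Vstar X₀ Y → MM Vstar X₀ Z → MM Vstar X₀ (Y + Z)
  | smul (a : ℝ) {Y : Phase V → Phase V} : MM Vstar X₀ Y → MM Vstar X₀ (a • Y)
  | lie {Y Z : Phase V → Phase V} : MM Vstar X₀ Y → MM Vstar X₀ Z → MM Vstar X₀ (lieB Y Z)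
  | lieX {Y : Phase V → Phase V} : MM Vstar X₀ Y → MM Vstar X₀ (lieB Y X₀)
  | mulS (f : Phase V → ℝ) (hf : ContDiff ℝ (⊤ : ℕ∞) f) {Y : Phase V → Phase V} :
      MM Vstar X₀ Y → MM Vstar X₀ (fun x => f x • Y x)

/-- A vertex `v` is controllable if `∂_{q_v} ∈ 𝓜` and `∂_{p_v} ∈ 𝓜`. -/
def Controllable {V : Type} [Fintype V] [DecidableEq V] (Vstar : Finset V)
    (X₀ : Phase V → Phase V) (v : V) : Prop :=
  MM Vstar X₀ (dq v) ∧ MM Vstar X₀ (dp v)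

/-- Two polynomials are equivalent if `f(·) = g(· + δ)` for some `δ ∈ ℝ`. -/
def PolyEquiv (f g : Polynomial ℝ) : Prop :=
  ∃ δ : ℝ, ∀ x : ℝ, f.eval x = g.eval (x + δ)

/-- `N(C)`: the set of vertices not in `C` having at least one neighbor in `C`. -/
def NC {V : Type} [Fintype V] [DecidableEq V] (G : SimpleGraph V) [DecidableRel G.Adj]
    (C : Finset V) : Finset V :=
  Finset.univ.filter fun v => v ∉ C ∧ ∃ c ∈ C, G.Adj c v

/-- `v` and `w` are `C`-equivalent: they are `C`-siblings (connected to `C` in exactly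
the same way) and for each `c ∈ C` adjacent to both, the polynomials `V''_{cv}` and
`V''_{cw}` are equivalent. -/
def CEquiv {V : Type} (G : SimpleGraph V) (Vp : V → V → Polynomial ℝ) (C : Finset V)
    (v w : V) : Prop :=
  (∀ c ∈ C, G.Adj c v ↔ G.Adj c w) ∧
  (∀ c ∈ C, G.Adj c v → G.Adj c w →
    PolyEquiv (derivative (derivative (Vp c v))) (derivative (derivative (Vp c w))))

/-- The recursively defined sets `C_0 = V*`,
`C_{k+1} = C_k ∪ {v ∈ N(C_k) : no other vertex of N(C_k) is C_k-equivalent to v}`. -/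
def Cseq {V : Type} [Fintype V] [DecidableEq V] (G : SimpleGraph V) [DecidableRel G.Adj]
    (Vp : V → V → Polynomial ℝ) (Vstar : Finset V) : ℕ → Finset V
  | 0 => Vstar
  | k + 1 =>
    Cseq G Vp Vstar k ∪
      (NC G (Cseq G Vp Vstar k)).filter fun v =>
        ∀ w ∈ NC G (Cseq G Vp Vstar k), CEquiv G Vp (Cseq G Vp Vstar k) w v → w = v

section FiniteFunctionAlgebras

variable {K W : Type*} [Field K] [Finite W]

lemma comp_mem_of_mem_subalgebra {E : Subalgebra K (W → K)} {h : W → K} (hh : h ∈ E) (φ : K → K) :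
    φ ∘ h ∈ E := by
  obtain ⟨p, hp⟩ := (exists_eval_eq_iff h (φ ∘ h)).2 fun v w hvw => congrArg φ hvw
  have hph : aeval h p = φ ∘ h := funext fun w => by
    rw [aeval_fn_apply, coe_aeval_eq_eval, hp]
  exact hph ▸ Algebra.adjoin_le (Set.singleton_subset_iff.2 hh) (aeval_mem_adjoin_singleton K h)

lemma indicator_preimage_mem_of_mem_subalgebra {E : Subalgebra K (W → K)} {h : W → K} (hh : h ∈ E)
    (t : Set K) : (h ⁻¹' t).indicator 1 ∈ E :=
  comp_mem_of_mem_subalgebra hh (t.indicator 1)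

lemma single_one_mem_of_separates [DecidableEq W] {E : Subalgebra K (W → K)} {v : W}
    (hsep : ∀ w ≠ v, ∃ h ∈ E, h v ≠ h w) : Pi.single v 1 ∈ E := by
  have := Fintype.ofFinite W
  choose! h hE hne using hsep
  have hprod : ∏ w ∈ Finset.univ.erase v, (h w ⁻¹' {h w v}).indicator 1 ∈ E :=
    prod_mem fun w hw =>
      indicator_preimage_mem_of_mem_subalgebra (hE w (Finset.ne_of_mem_erase hw)) _
  convert hprod using 1
  funext u
  rw [Finset.prod_apply]
  rcases eq_or_ne u v with rfl | hu
  · simp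
  · rw [Pi.single_eq_of_ne hu, Finset.prod_eq_zero (i := u) (by simp [hu])]
    exact Set.indicator_of_notMem (s := h u ⁻¹' {h u v}) (hne u hu).symm 1

end FiniteFunctionAlgebras

/-- The algebra of scalars whose action preserves the submodule `N`. -/
def multiplierAlgebra {R M : Type*} (A : Type*) [CommSemiring R] [Semiring A] [Algebra R A]
    [AddCommMonoid M] [Module R M] [Module A M] [IsScalarTower R A M] (N : Submodule R M) :
    Subalgebra R A where
  carrier := {a | ∀ m ∈ N, a • m ∈ N}
  mul_mem' ha hb m hm := mul_smul (_ : A) _ m ▸ ha _ (hb m hm)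
  add_mem' ha hb m hm := add_smul (_ : A) _ m ▸ N.add_mem (ha m hm) (hb m hm)
  algebraMap_mem' r m hm := (algebraMap_smul A r m).symm ▸ N.smul_mem r hm

lemma multiplierAlgebra_comap_le {R A M M' : Type*} [CommSemiring R] [Semiring A] [Algebra R A]
    [AddCommMonoid M] [Module R M] [Module A M] [IsScalarTower R A M]
    [AddCommMonoid M'] [Module R M'] [Module A M'] [IsScalarTower R A M']
    (e : M ≃ₗ[A] M') (N : Submodule R M') :
    multiplierAlgebra A (N.comap (e.restrictScalars R).toLinearMap) ≤ multiplierAlgebra A N := by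
  intro a ha m hm
  simpa using ha (e.symm m) (by simpa using hm)

lemma apply_aeval_of_apply_eq_mul {R M : Type*} [CommSemiring R] [AddCommMonoid M] [Module R M]
    {T : Module.End R M} {ε : M →ₗ[R] R} {μ : R} (hε : ∀ m, ε (T m) = μ * ε m) (p : R[X]) (m : M) :
    ε (aeval T p m) = p.eval μ * ε m := by
  induction p using Polynomial.induction_on with
  | C r => simp
  | add p q hp hq => simp [hp, hq, add_mul]
  | monomial n r ih =>
    rw [pow_succ', mul_left_comm, map_mul, aeval_X, Module.End.mul_apply, hε, ih,
      eval_mul (p := X), eval_X, mul_assoc]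

lemma coeff_taylor_of_natDegree_le {R : Type*} [CommSemiring R] {p : R[X]} {n : ℕ}
    (hp : p.natDegree ≤ n) (r : R) : (taylor r p).coeff n = p.coeff n := by
  rw [taylor_coeff, eq_C_of_natDegree_le_zero (p := hasseDeriv n p)
    ((natDegree_hasseDeriv_le p n).trans (by lia)), eval_C, hasseDeriv_coeff, zero_add,
    Nat.choose_self, Nat.cast_one, one_mul]

lemma coeff_taylor_of_natDegree_le_succ {R : Type*} [CommSemiring R] {p : R[X]} {n : ℕ}
    (hp : p.natDegree ≤ n + 1) (r : R) :
    (taylor r p).coeff n = p.coeff n + (n + 1) * p.coeff (n + 1) * r := by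
  rw [taylor_coeff, eq_X_add_C_of_natDegree_le_one (p := hasseDeriv n p)
    ((natDegree_hasseDeriv_le p n).trans (by lia))]
  simp only [hasseDeriv_coeff, eval_add, eval_mul, eval_C, eval_X, zero_add, Nat.choose_self,
    add_comm 1 n, Nat.choose_succ_self_right]
  push_cast
  ring

section PolynomialFamilies

section CommRing

variable {R W : Type*} [CommRing R]

/-- A space of families of polynomials that is stable under the componentwise operations `f ↦ f'`
and `(f, g) ↦ (f g)'`, although not necessarily under `(f, g) ↦ f g`. -/
structure IsLeibnizClosed (S : Submodule R (W → R[X])) : Prop where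
  derivative_comp_mem : ∀ {f}, f ∈ S → derivative ∘ f ∈ S
  derivative_comp_mul_mem : ∀ {f g}, f ∈ S → g ∈ S → derivative ∘ (f * g) ∈ S

variable {S : Submodule R (W → R[X])}

lemma IsLeibnizClosed.iterate_derivative_comp_mem (hS : IsLeibnizClosed S) {f : W → R[X]}
    (hf : f ∈ S) (k : ℕ) : derivative^[k] ∘ f ∈ S := by
  induction k with
  | zero => exact hf
  | succ k ih => exact Function.iterate_succ' (derivative (R := R)) k ▸ hS.derivative_comp_mem ih

/-- The weighted Euler operator `g ↦ (b X g)'`, diagonal in the monomials. -/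
def euler (b : W → R) : Module.End R (W → R[X]) :=
  (derivative.compLeft W).comp (LinearMap.mulLeft R (monomial 1 ∘ b))

lemma coeff_euler (b : W → R) (g : W → R[X]) (w : W) (k : ℕ) :
    (euler b g w).coeff k = b w * (k + 1) * (g w).coeff k := by
  change (derivative (monomial 1 (b w) * g w)).coeff k = _
  rw [coeff_derivative, ← C_mul_X_eq_monomial, mul_assoc, coeff_C_mul, coeff_X_mul]
  ring

lemma IsLeibnizClosed.euler_mem (hS : IsLeibnizClosed S) {b : W → R} (hb : monomial 1 ∘ b ∈ S)
    {g : W → R[X]} (hg : g ∈ S) : euler b g ∈ S :=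
  hS.derivative_comp_mul_mem hb hg

/-- The largest derivative-stable subspace of `T`. -/
def derivativeCore (T : Submodule R (W → R[X])) : Submodule R (W → R[X]) where
  carrier := {f | ∀ k, derivative^[k] ∘ f ∈ T}
  zero_mem' k := by
    convert T.zero_mem using 1
    exact funext fun _ => iterate_derivative_zero
  add_mem' hf hg k := by
    convert T.add_mem (hf k) (hg k) using 1
    exact funext fun _ => iterate_map_add derivative k _ _
  smul_mem' r f hf k := by
    convert T.smul_mem r (hf k) using 1
    exact funext fun w => iterate_derivative_smul r (f w) k

lemma derivative_comp_mem_derivativeCore {T : Submodule R (W → R[X])} {f : W → R[X]}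
    (hf : f ∈ derivativeCore T) : derivative ∘ f ∈ derivativeCore T := fun k => by
  convert hf (k + 1) using 1
  rw [Function.iterate_succ, Function.comp_assoc]

lemma isLeibnizClosed_derivativeCore {T : Submodule R (W → R[X])}
    (hT : ∀ {f g}, f ∈ T → g ∈ T → derivative ∘ (f * g) ∈ T) :
    IsLeibnizClosed (derivativeCore T) where
  derivative_comp_mem := derivative_comp_mem_derivativeCore
  derivative_comp_mul_mem {f g} hf hg k := by
    induction k generalizing f g with
    | zero =>
      have hf₀ : f ∈ T := hf 0
      have hg₀ : g ∈ T := hg 0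
      exact hT hf₀ hg₀
    | succ k ih =>
      have hleibniz : derivative^[k + 1] ∘ derivative ∘ (f * g) =
          derivative^[k] ∘ derivative ∘ ((derivative ∘ f) * g) +
            derivative^[k] ∘ derivative ∘ (f * (derivative ∘ g)) := by
        funext w
        simp only [Function.comp_apply, Pi.add_apply, Pi.mul_apply, Function.iterate_succ_apply,
          derivative_mul (f := f w), map_add, iterate_map_add]
      rw [hleibniz]
      exact T.add_mem (ih (derivative_comp_mem_derivativeCore hf) hg)
        (ih hf (derivative_comp_mem_derivativeCore hg))

/-- The translation of the variable of the component at `w` by `δ w`. -/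
def translation (δ : W → R) : (W → R[X]) ≃ₗ[W → R] (W → R[X]) where
  __ := Equiv.piCongrRight fun w => (taylorEquiv (δ w)).toEquiv
  map_add' f g := by
    funext w
    simp
  map_smul' a g := by
    funext w
    simp

lemma translation_apply (δ : W → R) (g : W → R[X]) (w : W) :
    translation δ g w = taylor (δ w) (g w) := rfl

lemma translation_mul (δ : W → R) (f g : W → R[X]) :
    translation δ (f * g) = translation δ f * translation δ g := by
  funext w
  simp only [translation_apply, Pi.mul_apply, taylor_mul]

lemma derivative_comp_translation (δ : W → R) (g : W → R[X]) :
    derivative ∘ translation δ g = translation δ (derivative ∘ g) := by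
  funext w
  simp [translation_apply, taylor_apply, derivative_comp]

lemma IsLeibnizClosed.comap_translation (hS : IsLeibnizClosed S) (δ : W → R) :
    IsLeibnizClosed (S.comap ((translation δ).restrictScalars R).toLinearMap) where
  derivative_comp_mem {f} hf := by
    simp only [Submodule.mem_comap, LinearEquiv.coe_coe, LinearEquiv.restrictScalars_apply] at hf ⊢
    exact derivative_comp_translation δ f ▸ hS.derivative_comp_mem hf
  derivative_comp_mul_mem {f g} hf hg := by
    simp only [Submodule.mem_comap, LinearEquiv.coe_coe, LinearEquiv.restrictScalars_apply]
      at hf hg ⊢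
    rw [← derivative_comp_translation, translation_mul]
    exact hS.derivative_comp_mul_mem hf hg

end CommRing

variable {K W : Type*} [Field K] {S : Submodule K (W → K[X])}

/-- Functional calculus for the Euler operator: it acts on the finitely many monomials of `g`, on
which `φ` may be interpolated by a polynomial. -/
lemma IsLeibnizClosed.exists_mem_coeff_eq [Finite W] (hS : IsLeibnizClosed S) {b : W → K}
    (hb : monomial 1 ∘ b ∈ S) (φ : K → K) {g : W → K[X]} (hg : g ∈ S) :
    ∃ g' ∈ S, ∀ w k, (g' w).coeff k = φ (b w * (k + 1)) * (g w).coeff k := by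
  let eigenvalue : (Σ w, (g w).support) → K := fun i => b i.1 * ((i.2 : ℕ) + 1)
  obtain ⟨p, hp⟩ := (exists_eval_eq_iff eigenvalue (φ ∘ eigenvalue)).2 fun _ _ h => congrArg φ h
  refine ⟨aeval (euler b) p g,
    aeval_apply_smul_mem_of_le_comap hg p _ fun _ => hS.euler_mem hb, fun w k => ?_⟩
  have hcoeff : (aeval (euler b) p g w).coeff k = p.eval (b w * (k + 1)) * (g w).coeff k :=
    apply_aeval_of_apply_eq_mul (ε := lcoeff K k ∘ₗ LinearMap.proj w)
      (fun f => coeff_euler b f w k) p g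
  rw [hcoeff]
  by_cases hk : (g w).coeff k = 0
  · rw [hk, mul_zero, mul_zero]
  · rw [hp ⟨w, k, mem_support_iff.2 hk⟩, Function.comp_apply]

variable [CharZero K]

lemma IsLeibnizClosed.monomial_one_indicator_preimage_mem [Finite W] (hS : IsLeibnizClosed S)
    {b : W → K} (hb : monomial 1 ∘ b ∈ S) {t : Set K} (ht : 0 ∉ t) :
    monomial 1 ∘ (b ⁻¹' t).indicator (1 : W → K) ∈ S := by
  obtain ⟨g, hg, hcoeff⟩ := hS.exists_mem_coeff_eq hb (fun x => t.indicator (·⁻¹) (x / 2)) hb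
  convert hg using 1
  funext w
  ext k
  rw [hcoeff, Function.comp_apply, Function.comp_apply, coeff_monomial, coeff_monomial]
  split_ifs with hk
  · subst hk
    rw [Nat.cast_one, one_add_one_eq_two, mul_div_cancel_right₀ _ two_ne_zero]
    by_cases hw : b w ∈ t
    · have hbw : b w ≠ 0 := fun h => ht (h ▸ hw)
      simp [hw, hbw]
    · simp [hw]
  · rw [mul_zero]

/-- On the support `s` of `h` the Euler operator `g ↦ (1_s X g)'` is invertible, and if `g'` is the
preimage of `g` there, then `(h X g')' = h g`. -/
lemma IsLeibnizClosed.mem_multiplierAlgebra [Finite W] (hS : IsLeibnizClosed S) {h : W → K}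
    (hh : monomial 1 ∘ h ∈ S) : h ∈ multiplierAlgebra (W → K) S := by
  intro g hg
  obtain ⟨g', hg', hcoeff⟩ := hS.exists_mem_coeff_eq
    (hS.monomial_one_indicator_preimage_mem hh (t := {0}ᶜ) (· rfl)) (fun x => x⁻¹) hg
  convert hS.euler_mem hh hg' using 1
  funext w
  ext k
  rw [coeff_euler, hcoeff, Pi.smul_apply', coeff_smul, smul_eq_mul]
  by_cases hw : h w = 0
  · simp [hw]
  · rw [Set.indicator_of_mem (by exact hw), Pi.one_apply, one_mul]
    have : (k + 1 : K) ≠ 0 := k.cast_add_one_ne_zero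
    field_simp

lemma IsLeibnizClosed.monomial_indicator_coeff_mem [Finite W] (hS : IsLeibnizClosed S) {s : Set W}
    (hs : monomial 1 ∘ s.indicator (1 : W → K) ∈ S) {g : W → K[X]} (hg : g ∈ S) (k : ℕ) :
    monomial k ∘ s.indicator (fun w => (g w).coeff k) ∈ S := by
  obtain ⟨g', hg', hcoeff⟩ := hS.exists_mem_coeff_eq hs (fun t => if t = k + 1 then 1 else 0) hg
  convert hg' using 1
  funext w
  ext j
  rw [hcoeff, Function.comp_apply, coeff_monomial]
  by_cases hw : w ∈ s
  · rcases eq_or_ne k j with rfl | hkj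
    · simp [hw]
    · simp [hw, hkj, hkj.symm]
  · have : (0 : K) ≠ k + 1 := k.cast_add_one_ne_zero.symm
    simp [hw, this]

lemma IsLeibnizClosed.monomial_comp_mem_of_le (hS : IsLeibnizClosed S) {h : W → K} {k m : ℕ}
    (hkm : k ≤ m) (hm : monomial m ∘ h ∈ S) : monomial k ∘ h ∈ S := by
  induction m, hkm using Nat.le_induction with
  | base => exact hm
  | succ m _ ih =>
    refine ih ?_
    convert S.smul_mem ((m : K) + 1)⁻¹ (hS.derivative_comp_mem hm) using 1
    funext w
    have : (m + 1 : K) ≠ 0 := m.cast_add_one_ne_zero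
    simp only [Function.comp_apply, Pi.smul_apply, derivative_monomial, smul_monomial,
      add_tsub_cancel_right, smul_eq_mul, Nat.cast_add, Nat.cast_one]
    congr 1
    field_simp

lemma IsLeibnizClosed.monomial_one_indicator_mem (hS : IsLeibnizClosed S) {s : Set W}
    {h : W → K} (hs : monomial 2 ∘ s.indicator (1 : W → K) ∈ S)
    (hh : monomial 0 ∘ s.indicator h ∈ S) : monomial 1 ∘ s.indicator h ∈ S := by
  convert S.smul_mem (2⁻¹ : K) (hS.derivative_comp_mul_mem hs hh) using 1
  funext w
  by_cases hw : w ∈ s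
  · simp [hw, smul_monomial, one_add_one_eq_two, mul_comm (h w)]
  · simp [hw]

lemma IsLeibnizClosed.monomial_one_coeff_one_mem [Finite W] (hS : IsLeibnizClosed S)
    {l : W → K[X]} (hl : l ∈ S) (hdeg : ∀ w, (l w).natDegree ≤ 1)
    (hcentered : ∀ w, (l w).coeff 1 ≠ 0 → (l w).coeff 0 = 0) :
    monomial 1 ∘ (fun w => (l w).coeff 1) ∈ S := by
  set a : W → K := fun w => (l w).coeff 1
  have hl_eq : ∀ w, l w = monomial 1 (a w) + C ((l w).coeff 0) := fun w =>
    (eq_X_add_C_of_natDegree_le_one (hdeg w)).trans (by rw [C_mul_X_eq_monomial])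
  have hsq : monomial 1 ∘ (a ^ 2) ∈ S := by
    convert S.smul_mem (2⁻¹ : K) (hS.derivative_comp_mul_mem hl hl) using 1
    funext w
    simp only [Function.comp_apply, Pi.smul_apply, Pi.mul_apply, Pi.pow_apply]
    rw [hl_eq w]
    by_cases hw : a w = 0
    · simp [hw]
    · rw [hcentered w hw, C_0, add_zero, monomial_mul_monomial, derivative_monomial, smul_monomial]
      simp [one_add_one_eq_two, sq, mul_comm _ (2 : K)]
  convert indicator_preimage_mem_of_mem_subalgebra
    (hS.mem_multiplierAlgebra (h := a ^ 2) hsq) {0}ᶜ l hl using 1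
  funext w
  rw [Function.comp_apply, Pi.smul_apply', hl_eq w]
  by_cases hw : a w = 0
  · simp [hw]
  · simp [hw, hcentered w hw]

lemma IsLeibnizClosed.monomial_one_top_coeff_mem [Finite W] (hS : IsLeibnizClosed S)
    {f : W → K[X]} (hf : f ∈ S) {n : ℕ} (hdeg : ∀ w, (f w).natDegree ≤ n + 1)
    (hcentered : ∀ w, (f w).coeff (n + 1) ≠ 0 → (f w).coeff n = 0) :
    monomial 1 ∘ (fun w => (f w).coeff (n + 1)) ∈ S := by
  have hcoeff : ∀ w k, ((derivative^[n] ∘ f) w).coeff k =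
      ((k + n).descFactorial n : K) * (f w).coeff (k + n) := fun w k => by
    rw [Function.comp_apply, coeff_iterate_derivative, nsmul_eq_mul]
  have hfactor : ((1 + n).descFactorial n : K) ≠ 0 :=
    Nat.cast_ne_zero.2 (Nat.descFactorial_eq_zero_iff_lt.not.2 (by lia))
  have hmem := hS.monomial_one_coeff_one_mem (hS.iterate_derivative_comp_mem hf n)
    (fun w => (natDegree_iterate_derivative _ _).trans (by have := hdeg w; lia))
    (fun w hw => by
      rw [hcoeff] at hw ⊢
      rw [zero_add, hcentered w (by rw [add_comm]; exact right_ne_zero_of_mul hw), mul_zero])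
  convert S.smul_mem ((1 + n).descFactorial n : K)⁻¹ hmem using 1
  funext w
  simp only [Pi.smul_apply, Function.comp_apply (f := monomial 1), smul_monomial, smul_eq_mul]
  rw [hcoeff, inv_mul_cancel_left₀ hfactor, add_comm]

lemma IsLeibnizClosed.exists_mem_multiplierAlgebra_ne_of_indicator [Finite W]
    (hS : IsLeibnizClosed S) {s : Set W} (hs₁ : monomial 1 ∘ s.indicator (1 : W → K) ∈ S)
    (hs₂ : monomial 2 ∘ s.indicator (1 : W → K) ∈ S) {f : W → K[X]} (hf : f ∈ S) {v w : W}
    (hv : v ∈ s) (hw : w ∈ s) (hne : f v ≠ f w) :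
    ∃ h ∈ multiplierAlgebra (W → K) S, h v ≠ h w := by
  obtain ⟨k, hk⟩ : ∃ k, (f v).coeff k ≠ (f w).coeff k := by
    by_contra! h
    exact hne (Polynomial.ext h)
  have hk_mem : monomial 0 ∘ s.indicator (fun u => (f u).coeff k) ∈ S :=
    hS.monomial_comp_mem_of_le k.zero_le (hS.monomial_indicator_coeff_mem hs₁ hf k)
  refine ⟨s.indicator fun u => (f u).coeff k,
    hS.mem_multiplierAlgebra (hS.monomial_one_indicator_mem hs₂ hk_mem), ?_⟩
  rwa [Set.indicator_of_mem hv, Set.indicator_of_mem hw]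

lemma IsLeibnizClosed.exists_mem_multiplierAlgebra_ne_of_centered [Finite W]
    (hS : IsLeibnizClosed S) {f : W → K[X]} (hf : f ∈ S) {n : ℕ}
    (hdeg : ∀ w, (f w).natDegree ≤ n + 1)
    (hcentered : ∀ w, (f w).coeff (n + 1) ≠ 0 → (f w).coeff n = 0) {v w : W}
    (hv : (f v).coeff (n + 1) ≠ 0) (hne : f v ≠ f w) :
    ∃ h ∈ multiplierAlgebra (W → K) S, h v ≠ h w := by
  have htop := hS.monomial_one_top_coeff_mem hf hdeg hcentered
  by_cases hvw : (f w).coeff (n + 1) = (f v).coeff (n + 1)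
  swap
  · exact ⟨_, hS.mem_multiplierAlgebra htop, Ne.symm hvw⟩
  have hn : 2 ≤ n + 1 := by
    contrapose! hne
    obtain rfl : n = 0 := by lia
    rw [eq_X_add_C_of_natDegree_le_one (hdeg v), eq_X_add_C_of_natDegree_le_one (hdeg w),
      hcentered v hv, hcentered w (hvw.trans_ne hv), ← hvw]
  set s : Set W := (fun u => (f u).coeff (n + 1)) ⁻¹' {(f v).coeff (n + 1)}
  have hs₁ : monomial 1 ∘ s.indicator (1 : W → K) ∈ S :=
    hS.monomial_one_indicator_preimage_mem htop hv.symm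
  have hs_top : monomial (n + 1) ∘ s.indicator (1 : W → K) ∈ S := by
    convert S.smul_mem ((f v).coeff (n + 1))⁻¹
      (hS.monomial_indicator_coeff_mem hs₁ hf (n + 1)) using 1
    funext u
    by_cases hu : (f u).coeff (n + 1) = (f v).coeff (n + 1)
    · simp [s, hu, smul_monomial, hv]
    · simp [s, hu]
  exact hS.exists_mem_multiplierAlgebra_ne_of_indicator hs₁
    (hS.monomial_comp_mem_of_le hn hs_top) hf rfl hvw hne

lemma IsLeibnizClosed.top_coeff_mem_and_exists_ne [Finite W] (hS : IsLeibnizClosed S)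
    {f : W → K[X]} (hf : f ∈ S) {n : ℕ} (hdeg : ∀ w, (f w).natDegree ≤ n + 1) :
    (fun w => (f w).coeff (n + 1)) ∈ multiplierAlgebra (W → K) S ∧
      ∀ v w, (f v).coeff (n + 1) ≠ 0 → (∀ r, f v ≠ taylor r (f w)) →
        ∃ h ∈ multiplierAlgebra (W → K) S, h v ≠ h w := by
  set δ : W → K := fun w => (f w).coeff n / ((n + 1) * (f w).coeff (n + 1))
  set F : W → K[X] := (translation δ).symm f
  have hF_mem : F ∈ S.comap ((translation δ).restrictScalars K).toLinearMap := by
    simpa [F] using hf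
  have hF_deg : ∀ w, (F w).natDegree ≤ n + 1 := fun w => (natDegree_taylor _ _).trans_le (hdeg w)
  have hF_top : ∀ w, (F w).coeff (n + 1) = (f w).coeff (n + 1) := fun w =>
    coeff_taylor_of_natDegree_le (hdeg w) _
  have hF_centered : ∀ w, (F w).coeff (n + 1) ≠ 0 → (F w).coeff n = 0 := fun w hw => by
    rw [hF_top] at hw
    have hn : (n + 1 : K) ≠ 0 := n.cast_add_one_ne_zero
    refine (coeff_taylor_of_natDegree_le_succ (hdeg w) (-δ w)).trans ?_
    simp only [δ]
    field_simp
    ring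
  have hS' := hS.comap_translation δ
  have hle := multiplierAlgebra_comap_le (translation δ) S
  refine ⟨funext hF_top ▸ hle (hS'.mem_multiplierAlgebra
    (hS'.monomial_one_top_coeff_mem hF_mem hF_deg hF_centered)), fun v w hv hne => ?_⟩
  have hF_ne : F v ≠ F w := fun h => hne (δ v + -δ w) <| by
    rw [← taylor_taylor]
    change _ = taylor (δ v) (F w)
    rw [← h]
    exact congrFun ((translation δ).apply_symm_apply f).symm v
  obtain ⟨h, hh, hvw⟩ := hS'.exists_mem_multiplierAlgebra_ne_of_centered hF_mem hF_deg hF_centered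
    ((hF_top v).trans_ne hv) hF_ne
  exact ⟨h, hle hh, hvw⟩

/-- Induction on the degree: where the top coefficients of both `f v` and `f w` vanish, cut `f` off
by the indicator of the vertices at which this happens. -/
lemma IsLeibnizClosed.exists_mem_multiplierAlgebra_ne [Finite W] (hS : IsLeibnizClosed S)
    {f : W → K[X]} (hf : f ∈ S) (hconst : ∀ w, (f w).natDegree = 0 → f w = 0) {v w : W}
    (hne : ∀ r, f v ≠ taylor r (f w)) : ∃ h ∈ multiplierAlgebra (W → K) S, h v ≠ h w := by
  obtain ⟨n, hdeg⟩ := Finite.exists_le fun u => (f u).natDegree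
  induction n generalizing f with
  | zero =>
    refine absurd ?_ (hne 0)
    rw [hconst v (Nat.le_zero.1 (hdeg v)), hconst w (Nat.le_zero.1 (hdeg w)), map_zero]
  | succ n ih =>
    obtain ⟨htop, hsep⟩ := hS.top_coeff_mem_and_exists_ne hf hdeg
    by_cases hv : (f v).coeff (n + 1) = 0
    swap
    · exact hsep v w hv hne
    by_cases hw : (f w).coeff (n + 1) = 0
    swap
    · exact ⟨_, htop, hv.trans_ne (Ne.symm hw)⟩
    set s : Set W := (fun u => (f u).coeff (n + 1)) ⁻¹' {0}
    set g : W → K[X] := s.indicator (1 : W → K) • f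
    have hg_of_mem : ∀ u ∈ s, g u = f u := fun u hu => by simp [g, hu]
    have hg_of_notMem : ∀ u ∉ s, g u = 0 := fun u hu => by simp [g, hu]
    refine ih (f := g) (indicator_preimage_mem_of_mem_subalgebra htop {0} f hf) (fun u hu => ?_)
      (by rwa [hg_of_mem v hv, hg_of_mem w hw]) (fun u => ?_)
    · by_cases hus : u ∈ s
      · rw [hg_of_mem u hus] at hu ⊢
        exact hconst u hu
      · exact hg_of_notMem u hus
    · by_cases hus : u ∈ s
      · rw [hg_of_mem u hus]
        exact (natDegree_le_pred (hdeg u) hus)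
      · simp [hg_of_notMem u hus]

lemma IsLeibnizClosed.single_one_mem [Finite W] [DecidableEq W] (hS : IsLeibnizClosed S) {v : W}
    (hsep : ∀ w ≠ v, ∃ h ∈ multiplierAlgebra (W → K) S, h v ≠ h w) {f : W → K[X]} (hf : f ∈ S)
    (hv : f v ≠ 0) : Pi.single v 1 ∈ S := by
  set n := (f v).natDegree
  have hsingle : Pi.single v (f v) ∈ S := by
    convert single_one_mem_of_separates hsep f hf using 1
    funext w
    rcases eq_or_ne w v with rfl | hw
    · simp
    · simp [hw]
  have hderiv : derivative^[n] (f v) = C ((n.factorial : K) * (f v).leadingCoeff) := by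
    rw [eq_C_of_natDegree_le_zero (p := derivative^[n] (f v))
      ((natDegree_iterate_derivative _ _).trans (Nat.sub_self n).le), coeff_iterate_derivative,
      zero_add, Nat.descFactorial_self, nsmul_eq_mul, coeff_natDegree]
  have hfactor : (n.factorial : K) * (f v).leadingCoeff ≠ 0 :=
    mul_ne_zero (Nat.cast_ne_zero.2 n.factorial_ne_zero) (leadingCoeff_ne_zero.2 hv)
  convert S.smul_mem ((n.factorial : K) * (f v).leadingCoeff)⁻¹
    (hS.iterate_derivative_comp_mem hsingle n) using 1
  funext w
  rcases eq_or_ne w v with rfl | hw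
  · rw [Pi.smul_apply, Function.comp_apply, Pi.single_eq_same, Pi.single_eq_same, hderiv, smul_C,
      smul_eq_mul, inv_mul_cancel₀ hfactor, C_1]
  · simp [hw]

end PolynomialFamilies

section VectorFields

section EvalOfLinear

variable {E : Type*} [NormedAddCommGroup E] [NormedSpace ℝ E]

lemma contDiff_eval_clm (p : ℝ[X]) (L : E →L[ℝ] ℝ) :
    ContDiff ℝ (⊤ : ℕ∞) fun x => p.eval (L x) := by
  simpa only [Function.comp_def, coe_aeval_eq_eval] using
    (p.contDiff_aeval (𝕜 := ℝ) (n := (⊤ : ℕ∞))).comp L.contDiff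

lemma hasFDerivAt_eval_clm (p : ℝ[X]) (L : E →L[ℝ] ℝ) (x : E) :
    HasFDerivAt (fun y => p.eval (L y)) ((derivative p).eval (L x) • L) x :=
  (p.hasDerivAt (L x)).comp_hasFDerivAt x L.hasFDerivAt

end EvalOfLinear

variable {V : Type}

/-- The linear functional `q_c` on phase space. -/
def position (c : V) : Phase V →L[ℝ] ℝ :=
  (ContinuousLinearMap.proj c).comp (ContinuousLinearMap.fst ℝ (V → ℝ) (V → ℝ))

/-- The linear functional `p_c` on phase space. -/
def momentum (c : V) : Phase V →L[ℝ] ℝ :=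
  (ContinuousLinearMap.proj c).comp (ContinuousLinearMap.snd ℝ (V → ℝ) (V → ℝ))

/-- The vector field `∑_w g_w(q_w - τ) ∂_{p_w}`, where `τ` is a linear functional on phase space;
only `τ = 0` and the positions `τ = q_c` occur. -/
def polyField (τ : Phase V →L[ℝ] ℝ) : (V → ℝ[X]) →ₗ[ℝ] (Phase V → Phase V) where
  toFun g x := (0, fun w => (g w).eval (x.1 w - τ x))
  map_add' f g := by
    funext x
    ext w <;> simp
  map_smul' r g := by
    funext x
    ext w <;> simp

lemma polyField_apply (τ : Phase V →L[ℝ] ℝ) (g : V → ℝ[X]) (x : Phase V) :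
    polyField τ g x = (0, fun w => (g w).eval (x.1 w - τ x)) := rfl

lemma fderiv_polyField [Finite V] (τ : Phase V →L[ℝ] ℝ) (g : V → ℝ[X]) (x h : Phase V) :
    fderiv ℝ (polyField τ g) x h =
      (0, fun w => (derivative (g w)).eval (x.1 w - τ x) * (h.1 w - τ h)) := by
  cases nonempty_fintype V
  have hderiv : HasFDerivAt (polyField τ g) _ x :=
    (hasFDerivAt_const 0 x).prodMk <| hasFDerivAt_pi.2 fun w =>
      hasFDerivAt_eval_clm (g w) (position w - τ) x
  rw [hderiv.fderiv]
  rfl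

variable [Fintype V]

lemma contDiff_polyField (τ : Phase V →L[ℝ] ℝ) (g : V → ℝ[X]) :
    ContDiff ℝ (⊤ : ℕ∞) (polyField τ g) :=
  contDiff_const.prodMk <| contDiff_pi.2 fun w => contDiff_eval_clm (g w) (position w - τ)

lemma lieB_const (u : Phase V) (Z : Phase V → Phase V) :
    lieB (fun _ => u) Z = fun x => fderiv ℝ Z x u := by
  funext x
  simp [lieB]

variable [DecidableEq V]

lemma polyField_single_one (v : V) : polyField 0 (Pi.single v 1) = dp v := by
  funext x
  ext w
  · rfl
  · rcases eq_or_ne w v with rfl | hw <;> simp [polyField_apply, dp, *]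

lemma lieB_dp (c : V) (Z : Phase V → Phase V) :
    lieB (dp c) Z = fun x => fderiv ℝ Z x (0, Pi.single c 1) :=
  lieB_const _ Z

lemma lieB_dq (c : V) (Z : Phase V → Phase V) :
    lieB (dq c) Z = fun x => fderiv ℝ Z x (Pi.single c 1, 0) :=
  lieB_const _ Z

lemma lieB_dq_polyField {c : V} {g : V → ℝ[X]} (hg : g c = 0) :
    lieB (dq c) (polyField (position c) g) = -polyField (position c) (derivative ∘ g) := by
  rw [lieB_dq]
  funext x
  rw [fderiv_polyField]
  ext w
  · simp [polyField_apply]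
  · rcases eq_or_ne w c with rfl | hw <;> simp [polyField_apply, position, *]

variable {G : SimpleGraph V} [DecidableRel G.Adj] {γ : V → ℝ} {U : V → ℝ → ℝ} {Vp : V → V → ℝ[X]}

lemma contDiff_X0 (hU : ∀ v, ContDiff ℝ (⊤ : ℕ∞) (U v)) :
    ContDiff ℝ (⊤ : ℕ∞) (X0 G γ U Vp) := by
  have hU' : ∀ v, ContDiff ℝ (⊤ : ℕ∞) (deriv (U v)) := fun v =>
    (contDiff_infty_iff_deriv.1 (hU v)).2
  refine contDiff_snd.prodMk <| contDiff_pi.2 fun v => ?_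
  exact (ContDiff.sub (by fun_prop) ((hU' v).comp (position v).contDiff)).sub <|
    ContDiff.sum fun w _ => contDiff_eval_clm (derivative (Vp v w)) (position v - position w)

lemma fderiv_X0 (hU : ∀ v, ContDiff ℝ (⊤ : ℕ∞) (U v)) (x h : Phase V) :
    fderiv ℝ (X0 G γ U Vp) x h = (h.2, fun v =>
      -(γ v) * h.2 v - deriv (deriv (U v)) (x.1 v) * h.1 v - ∑ w with G.Adj v w,
        (derivative (derivative (Vp v w))).eval (x.1 v - x.1 w) * (h.1 v - h.1 w)) := by
  have hpinning : ∀ v, HasFDerivAt (fun y : Phase V => deriv (U v) (y.1 v))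
      (deriv (deriv (U v)) (x.1 v) • position v) x := fun v =>
    HasDerivAt.comp_hasFDerivAt (f := position v) x
      ((contDiff_infty_iff_deriv.1 (hU v)).2.differentiable (by simp) (x.1 v)).hasDerivAt
      (position v).hasFDerivAt
  have hinteraction : ∀ v w, HasFDerivAt
      (fun y : Phase V => (derivative (Vp v w)).eval (y.1 v - y.1 w))
      ((derivative (derivative (Vp v w))).eval (x.1 v - x.1 w) • (position v - position w)) x :=
    fun v w => hasFDerivAt_eval_clm (derivative (Vp v w)) (position v - position w) x
  have hderiv : HasFDerivAt (X0 G γ U Vp) _ x :=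
    hasFDerivAt_snd.prodMk <| hasFDerivAt_pi.2 fun v =>
      (((momentum v).hasFDerivAt.const_mul (-(γ v))).sub (hpinning v)).sub <|
        HasFDerivAt.fun_sum fun w _ => hinteraction v w
  rw [hderiv.fderiv]
  ext v <;> simp [position, momentum]

lemma lieB_dp_X0 (hU : ∀ v, ContDiff ℝ (⊤ : ℕ∞) (U v)) (v : V) :
    lieB (dp v) (X0 G γ U Vp) = dq v + (-(γ v)) • dp v := by
  rw [lieB_dp]
  funext x
  rw [fderiv_X0 hU]
  ext w
  · simp [dp, dq]
  · rcases eq_or_ne w v with rfl | hw <;> simp [dp, dq, *]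

lemma lieB_polyField_X0 (hU : ∀ v, ContDiff ℝ (⊤ : ℕ∞) (U v)) (f : V → ℝ[X]) :
    lieB (polyField 0 f) (X0 G γ U Vp) = fun x => (fun w => (f w).eval (x.1 w), fun w =>
      -(γ w) * (f w).eval (x.1 w) - (derivative (f w)).eval (x.1 w) * x.2 w) := by
  funext x
  rw [lieB, fderiv_X0 hU, fderiv_polyField]
  ext w <;> simp [polyField_apply, X0]

lemma lieB_lieB_polyField_X0 (hU : ∀ v, ContDiff ℝ (⊤ : ℕ∞) (U v)) (f g : V → ℝ[X]) :
    lieB (lieB (polyField 0 f) (X0 G γ U Vp)) (polyField 0 g) =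
      polyField 0 (derivative ∘ (f * g)) := by
  rw [lieB_polyField_X0 hU]
  funext x
  have heval : ∀ (p : ℝ[X]) w, HasFDerivAt (fun y : Phase V => p.eval (y.1 w))
      ((derivative p).eval (x.1 w) • position w) x := fun p w =>
    hasFDerivAt_eval_clm p (position w) x
  have hderiv : HasFDerivAt (fun y : Phase V => ((fun w => (f w).eval (y.1 w), fun w =>
      -(γ w) * (f w).eval (y.1 w) - (derivative (f w)).eval (y.1 w) * y.2 w) : Phase V)) _ x :=
    (hasFDerivAt_pi.2 fun w => heval (f w) w).prodMk <| hasFDerivAt_pi.2 fun w =>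
      ((heval (f w) w).const_mul (-(γ w))).sub
        ((heval (derivative (f w)) w).mul (momentum w).hasFDerivAt)
  rw [lieB, hderiv.fderiv, fderiv_polyField]
  ext w
  · simp [polyField_apply, position]
  · simp [polyField_apply, position, momentum, add_comm, mul_comm]

end VectorFields

lemma eval_add_eq_sum_iterate_derivative {K : Type*} [Field K] [CharZero K] {p : K[X]} {N : ℕ}
    (hN : p.natDegree < N) (x y : K) :
    p.eval (x + y) =
      ∑ k ∈ Finset.range N, (k.factorial : K)⁻¹ * y ^ k * (derivative^[k] p).eval x := by
  rw [add_comm, ← taylor_eval, eval_eq_sum_range' ((natDegree_taylor p x).trans_lt hN)]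
  refine Finset.sum_congr rfl fun k _ => ?_
  have hfactorial : (k.factorial : K) ≠ 0 := Nat.cast_ne_zero.2 k.factorial_ne_zero
  rw [taylor_coeff, ← factorial_smul_hasseDeriv, LinearMap.smul_apply, eval_smul, nsmul_eq_mul]
  field_simp

section Membership

variable {V : Type} [Fintype V] [DecidableEq V] {Vs : Finset V} {X Y Z : Phase V → Phase V}

lemma MM.nonempty (h : MM Vs X Y) : Vs.Nonempty := by
  induction h with
  | basic v hv => exact ⟨v, hv⟩
  | add _ _ ih _ => exact ih
  | smul _ _ ih => exact ih
  | lie _ _ ih _ => exact ih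
  | lieX _ ih => exact ih
  | mulS _ _ _ ih => exact ih

/-- The collection `𝓜` as a linear space of vector fields. When `Vs` is empty, so is `𝓜`, and not
even the zero field belongs to it. -/
def MM.submodule (X : Phase V → Phase V) (hVs : Vs.Nonempty) :
    Submodule ℝ (Phase V → Phase V) where
  carrier := {Y | MM Vs X Y}
  zero_mem' := by simpa using (MM.basic (X₀ := X) _ hVs.choose_spec).smul 0
  add_mem' := .add
  smul_mem' a _ := .smul a

lemma MM.sum {ι : Type*} {s : Finset ι} {F : ι → Phase V → Phase V} (hVs : Vs.Nonempty)
    (hF : ∀ i ∈ s, MM Vs X (F i)) : MM Vs X (∑ i ∈ s, F i) :=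
  (MM.submodule X hVs).sum_mem hF

lemma MM.of_eqOn_compl {C : Finset V} (hY : MM Vs X Y) (hC : ∀ c ∈ C, MM Vs X (dp c))
    (hYsmooth : ContDiff ℝ (⊤ : ℕ∞) Y) (hZsmooth : ContDiff ℝ (⊤ : ℕ∞) Z)
    (hfst : ∀ x, (Z x).1 = (Y x).1) (hsnd : ∀ x, ∀ w ∉ C, (Z x).2 w = (Y x).2 w) :
    MM Vs X Z := by
  have hdiff : MM Vs X (∑ c ∈ C, fun x => ((Z x).2 c - (Y x).2 c) • (dp c : Phase V → Phase V) x) :=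
    MM.sum hY.nonempty fun c hc => (hC c hc).mulS (fun x => (Z x).2 c - (Y x).2 c) (by fun_prop)
  convert hY.add hdiff using 1
  funext x
  ext w
  · simp [dp, Finset.sum_apply, Prod.fst_sum, hfst]
  · by_cases hw : w ∈ C <;> simp [dp, Finset.sum_apply, Prod.snd_sum, Pi.single_apply, hw, hsnd]

lemma MM.iterate_derivative_polyField {c : V} (hc : MM Vs X (dq c)) {g : V → ℝ[X]} (hg : g c = 0)
    (h : MM Vs X (polyField (position c) g)) (k : ℕ) :
    MM Vs X (polyField (position c) (derivative^[k] ∘ g)) := by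
  induction k with
  | zero => exact h
  | succ k ih =>
    have hbracket := (hc.lie ih).smul (-1)
    rwa [lieB_dq_polyField (by simp [hg]), neg_smul, one_smul, neg_neg, ← Function.comp_assoc,
      ← Function.iterate_succ'] at hbracket

/-- By Taylor's formula `g(q - τ) = ∑_k (σ - τ)^k / k! * g^{(k)}(q - σ)`, in which the
coefficients are smooth functions on phase space that do not depend on the component. -/
lemma MM.polyField_of_iterate_derivative {σ : Phase V →L[ℝ] ℝ} (τ : Phase V →L[ℝ] ℝ)
    {g : V → ℝ[X]} (h : ∀ k, MM Vs X (polyField σ (derivative^[k] ∘ g))) :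
    MM Vs X (polyField τ g) := by
  obtain ⟨N, hN⟩ := Finite.exists_le fun w => (g w).natDegree
  have htaylor : polyField τ g = ∑ k ∈ Finset.range (N + 1), fun x =>
      ((k.factorial : ℝ)⁻¹ * (σ x - τ x) ^ k) • polyField σ (derivative^[k] ∘ g) x := by
    funext x
    ext w
    · simp [polyField_apply, Finset.sum_apply, Prod.fst_sum]
    · have hsum := eval_add_eq_sum_iterate_derivative (Nat.lt_succ_of_le (hN w))
        (x.1 w - σ x) (σ x - τ x)
      simpa [polyField_apply, Finset.sum_apply, Prod.snd_sum] using hsum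
  rw [htaylor]
  exact MM.sum (h 0).nonempty fun k _ =>
    (h k).mulS (fun x => (k.factorial : ℝ)⁻¹ * (σ x - τ x) ^ k) (by fun_prop)

end Membership

section Equivalence

lemma polyEquiv_iff_eq_taylor {f g : ℝ[X]} : PolyEquiv f g ↔ ∃ δ, f = taylor δ g := by
  refine exists_congr fun δ => ⟨fun h => Polynomial.funext fun x => ?_, ?_⟩
  · rw [taylor_eval, h]
  · rintro rfl x
    exact taylor_eval δ g x

lemma PolyEquiv.ne_zero_iff {f g : ℝ[X]} (h : PolyEquiv f g) : f ≠ 0 ↔ g ≠ 0 := by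
  obtain ⟨δ, rfl⟩ := polyEquiv_iff_eq_taylor.1 h
  exact (taylor_eq_zero δ g).not

lemma PolyEquiv.reflect {f g f' g' : ℝ[X]} (hf : ∀ x, f'.eval x = f.eval (-x))
    (hg : ∀ x, g'.eval x = g.eval (-x)) (h : PolyEquiv f g) : PolyEquiv g' f' := by
  obtain ⟨δ, hδ⟩ := h
  refine ⟨δ, fun x => ?_⟩
  rw [hf, hg, hδ]
  congr 1
  ring

lemma eval_derivative_derivative_of_eval_neg {f g : ℝ[X]} (h : ∀ x, f.eval x = g.eval (-x))
    (x : ℝ) : (derivative (derivative f)).eval x = (derivative (derivative g)).eval (-x) := by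
  have hcomp : f = g.comp (-X) := Polynomial.funext fun x => by simp [h]
  simp [hcomp, derivative_comp]

variable {V : Type} {G : SimpleGraph V} {Vp : V → V → ℝ[X]} {C : Finset V} {c v w : V}

/-- The family of the second derivatives `V''_{wc}` for the neighbors `w ∉ C` of `c`, extended by
zero. It records the part of `[∂_{q_c}, X₀]` that acts outside `C`. -/
def forceFamily (G : SimpleGraph V) (Vp : V → V → ℝ[X]) (C : Finset V) (c w : V) : ℝ[X] :=
  if w ∉ C ∧ G.Adj w c then derivative (derivative (Vp w c)) else 0

lemma forceFamily_of_adj (hw : w ∉ C) (hadj : G.Adj w c) :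
    forceFamily G Vp C c w = derivative (derivative (Vp w c)) :=
  if_pos ⟨hw, hadj⟩

lemma forceFamily_of_mem (hw : w ∈ C) : forceFamily G Vp C c w = 0 :=
  if_neg fun h => h.1 hw

lemma natDegree_derivative_derivative_pos {p : ℝ[X]} (hp : 3 ≤ p.natDegree) :
    0 < (derivative (derivative p)).natDegree := by
  rw [natDegree_derivative, natDegree_derivative]
  omega

lemma forceFamily_ne_zero_iff (hdeg : ∀ u v, G.Adj u v → 3 ≤ (Vp u v).natDegree) :
    forceFamily G Vp C c w ≠ 0 ↔ w ∉ C ∧ G.Adj w c := by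
  refine ⟨not_imp_comm.1 fun h => if_neg h, fun h => ?_⟩
  rw [forceFamily_of_adj h.1 h.2]
  exact ne_zero_of_natDegree_gt (natDegree_derivative_derivative_pos (hdeg w c h.2))

lemma forceFamily_eq_zero_of_natDegree_eq_zero
    (hdeg : ∀ u v, G.Adj u v → 3 ≤ (Vp u v).natDegree)
    (h : (forceFamily G Vp C c w).natDegree = 0) : forceFamily G Vp C c w = 0 := by
  by_contra hne
  obtain ⟨hw, hadj⟩ := (forceFamily_ne_zero_iff hdeg).1 hne
  rw [forceFamily_of_adj hw hadj] at h
  exact (natDegree_derivative_derivative_pos (hdeg w c hadj)).ne' h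

lemma mem_NC_and_CEquiv_of_forall_polyEquiv [Fintype V] [DecidableEq V] [DecidableRel G.Adj]
    (hsym : ∀ u v, G.Adj u v → ∀ x : ℝ, (Vp v u).eval x = (Vp u v).eval (-x))
    (hdeg : ∀ u v, G.Adj u v → 3 ≤ (Vp u v).natDegree) (hv : v ∈ NC G C)
    (h : ∀ c ∈ C, PolyEquiv (forceFamily G Vp C c v) (forceFamily G Vp C c w)) :
    w ∈ NC G C ∧ CEquiv G Vp C w v := by
  simp only [NC, Finset.mem_filter, Finset.mem_univ, true_and] at hv ⊢
  obtain ⟨hvC, c₀, hc₀, hadj₀⟩ := hv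
  have hsupp : ∀ c ∈ C, G.Adj v c ↔ w ∉ C ∧ G.Adj w c := fun c hc => by
    rw [← forceFamily_ne_zero_iff hdeg, ← (h c hc).ne_zero_iff, forceFamily_ne_zero_iff hdeg,
      and_iff_right hvC]
  have hw := (hsupp c₀ hc₀).1 hadj₀.symm
  refine ⟨⟨hw.1, c₀, hc₀, hw.2.symm⟩, fun c hc => ?_, fun c hc hcw hcv => ?_⟩
  · rw [G.adj_comm c w, G.adj_comm c v, hsupp c hc, and_iff_right hw.1]
  · have hequiv := h c hc
    rw [forceFamily_of_adj hvC hcv.symm, forceFamily_of_adj hw.1 hcw.symm] at hequiv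
    exact hequiv.reflect (eval_derivative_derivative_of_eval_neg (hsym v c hcv.symm))
      (eval_derivative_derivative_of_eval_neg (hsym w c hcw.symm))

end Equivalence

section Controllability

variable {V : Type} [Fintype V] [DecidableEq V] {G : SimpleGraph V} [DecidableRel G.Adj]
  {Vs : Finset V} {γ : V → ℝ} {U : V → ℝ → ℝ} {Vp : V → V → ℝ[X]} {C : Finset V}

lemma controllable_of_dp (hU : ∀ v, ContDiff ℝ (⊤ : ℕ∞) (U v)) {v : V}
    (h : MM Vs (X0 G γ U Vp) (dp v)) : Controllable Vs (X0 G γ U Vp) v := by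
  have hdq := h.lieX.add (h.smul (γ v))
  rw [lieB_dp_X0 hU, neg_smul, neg_add_cancel_right] at hdq
  exact ⟨hdq, h⟩

lemma polyField_forceFamily_mem (hU : ∀ v, ContDiff ℝ (⊤ : ℕ∞) (U v))
    (hC : ∀ c ∈ C, Controllable Vs (X0 G γ U Vp) c) {c : V} (hc : c ∈ C) :
    MM Vs (X0 G γ U Vp) (polyField (position c) (forceFamily G Vp C c)) := by
  have hbracket := (hC c hc).1.lieX
  rw [lieB_dq] at hbracket
  refine hbracket.of_eqOn_compl (fun c hc => (hC c hc).2)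
    (((contDiff_X0 hU).fderiv_right (by simp)).clm_apply contDiff_const) (contDiff_polyField _ _)
    (fun x => by simp only [fderiv_X0 hU, polyField_apply]) fun x w hw => ?_
  have hwc : w ≠ c := fun h => hw (h ▸ hc)
  simp [fderiv_X0 hU, polyField_apply, position, forceFamily, hw, hwc, Pi.single_apply,
    apply_ite (eval _)]

/-- The families `f` for which `∑_w f_w^{(k)}(q_w) ∂_{p_w} ∈ 𝓜` for all `k`. -/
def controllableFamilies (X : Phase V → Phase V) (hVs : Vs.Nonempty) : Submodule ℝ (V → ℝ[X]) :=
  derivativeCore ((MM.submodule X hVs).comap (polyField 0))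

lemma isLeibnizClosed_controllableFamilies (hU : ∀ v, ContDiff ℝ (⊤ : ℕ∞) (U v))
    (hVs : Vs.Nonempty) : IsLeibnizClosed (controllableFamilies (X0 G γ U Vp) hVs) :=
  isLeibnizClosed_derivativeCore fun {f g} hf hg => by
    change MM Vs (X0 G γ U Vp) (polyField 0 (derivative ∘ (f * g)))
    rw [← lieB_lieB_polyField_X0 (G := G) (γ := γ) (Vp := Vp) hU]
    exact .lie (.lieX hf) hg

lemma forceFamily_mem_controllableFamilies (hU : ∀ v, ContDiff ℝ (⊤ : ℕ∞) (U v))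
    (hVs : Vs.Nonempty) (hC : ∀ c ∈ C, Controllable Vs (X0 G γ U Vp) c) {c : V} (hc : c ∈ C) :
    forceFamily G Vp C c ∈ controllableFamilies (X0 G γ U Vp) hVs := fun k =>
  MM.polyField_of_iterate_derivative 0 fun j => by
    rw [← Function.comp_assoc, ← Function.iterate_add]
    exact (hC c hc).1.iterate_derivative_polyField (forceFamily_of_mem hc)
      (polyField_forceFamily_mem hU hC hc) (j + k)

lemma controllable_step (hU : ∀ v, ContDiff ℝ (⊤ : ℕ∞) (U v))
    (hsym : ∀ u v, G.Adj u v → ∀ x : ℝ, (Vp v u).eval x = (Vp u v).eval (-x))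
    (hdeg : ∀ u v, G.Adj u v → 3 ≤ (Vp u v).natDegree)
    (hC : ∀ c ∈ C, Controllable Vs (X0 G γ U Vp) c) {v : V} (hv : v ∈ NC G C)
    (hunique : ∀ w ∈ NC G C, CEquiv G Vp C w v → w = v) :
    Controllable Vs (X0 G γ U Vp) v := by
  obtain ⟨-, hvC, c₀, hc₀, hadj₀⟩ := Finset.mem_filter.1 hv
  have hVs := (hC c₀ hc₀).2.nonempty
  have hS := isLeibnizClosed_controllableFamilies (G := G) (γ := γ) (Vp := Vp) hU hVs
  have hforce := fun c (hc : c ∈ C) => forceFamily_mem_controllableFamilies hU hVs hC hc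
  have hseparated : ∀ w ≠ v, ∃ h ∈ multiplierAlgebra (V → ℝ)
      (controllableFamilies (X0 G γ U Vp) hVs), h v ≠ h w := by
    intro w hwv
    obtain ⟨c, hc, hinequivalent⟩ : ∃ c ∈ C,
        ¬ PolyEquiv (forceFamily G Vp C c v) (forceFamily G Vp C c w) := by
      by_contra! hequiv
      obtain ⟨hw, hwequiv⟩ := mem_NC_and_CEquiv_of_forall_polyEquiv hsym hdeg hv hequiv
      exact hwv (hunique w hw hwequiv)
    rw [polyEquiv_iff_eq_taylor, not_exists] at hinequivalent
    exact hS.exists_mem_multiplierAlgebra_ne (hforce c hc)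
      (fun _ => forceFamily_eq_zero_of_natDegree_eq_zero hdeg) hinequivalent
  have hsingle := hS.single_one_mem hseparated (hforce c₀ hc₀)
    ((forceFamily_ne_zero_iff hdeg).2 ⟨hvC, hadj₀.symm⟩)
  exact controllable_of_dp hU (polyField_single_one v ▸ hsingle 0)

end Controllability

theorem network_controllable_of_Cseq_eq_univ_general
    {V : Type} [Fintype V] [DecidableEq V] (G : SimpleGraph V) [DecidableRel G.Adj]
    (Vstar : Finset V) (γ : V → ℝ) (U : V → ℝ → ℝ) (Vp : V → V → Polynomial ℝ)
    (hU : ∀ v, ContDiff ℝ (⊤ : ℕ∞) (U v))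
    (hsym : ∀ u v, G.Adj u v → ∀ x : ℝ, (Vp v u).eval x = (Vp u v).eval (-x))
    (hdeg : ∀ u v, G.Adj u v → 3 ≤ (Vp u v).natDegree) (k : ℕ) :
    ∀ v ∈ Cseq G Vp Vstar k, Controllable Vstar (X0 G γ U Vp) v := by
  induction k with
  | zero => exact fun v hv => controllable_of_dp hU (.basic v hv)
  | succ k ih =>
    intro v hv
    rcases Finset.mem_union.1 hv with hold | hnew
    · exact ih v hold
    · obtain ⟨hneighbor, hunique⟩ := Finset.mem_filter.1 hnew
      exact controllable_step hU hsym hdeg ih hneighbor hunique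

/-- Theorem 5.6. If `C_k = V` for some `k ≥ 0`, then the network is
controllable: `∂_{q_v} ∈ 𝓜` and `∂_{p_v} ∈ 𝓜` for every `v ∈ V`. -/
theorem network_controllable_of_Cseq_eq_univ
    {V : Type} [Fintype V] [DecidableEq V] (G : SimpleGraph V) [DecidableRel G.Adj]
    (Vstar : Finset V) (γ : V → ℝ) (U : V → ℝ → ℝ) (Vp : V → V → Polynomial ℝ)
    (hγpos : ∀ v ∈ Vstar, 0 < γ v) (hγ0 : ∀ v ∉ Vstar, γ v = 0)
    (hU : ∀ v, ContDiff ℝ (⊤ : ℕ∞) (U v))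
    (hsym : ∀ u v, G.Adj u v → ∀ x : ℝ, (Vp v u).eval x = (Vp u v).eval (-x))
    (hdeg : ∀ u v, G.Adj u v → 3 ≤ (Vp u v).natDegree)
    (hk : ∃ k : ℕ, Cseq G Vp Vstar k = Finset.univ) :
    ∀ v : V, Controllable Vstar (X0 G γ U Vp) v := by
  obtain ⟨k, hk⟩ := hk
  exact fun v => network_controllable_of_Cseq_eq_univ_general G Vstar γ U Vp hU hsym hdeg k v
    (hk ▸ Finset.mem_univ v)
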